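/- (Incompleteness with the additive constant 0) Extend acLL with the constant 0 and the rule 0L: R{0} ⊢ C for any context R and formula C, and let the label a satisfy C, W, E ∈ f(a). The sequent !^a((r←(0→q))←p), (s←p)→0 ⊢ r is not provable in this extended intuitionistic system, yet its translation (with 0̂ = 0), namely ⊢ ((⊤⊗(s⅋p⊥), ?^a(p⊗((⊤⅋q)⊗r⊥))), r), is provable in CacLL. Hence conservativity fails in the presence of 0. -/

import Mathlib

set_option autoImplicit false

namespace NACLL

/-- Structures: binary trees whose leaves are formulas, with an empty structure.
`(∅,Γ)` and `(Γ,∅)` are identified with `Γ` via the smart constructor `comma`. -/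
inductive Struct (F : Type) : Type where
  | emp : Struct F
  | leaf : F → Struct F
  | pair : Struct F → Struct F → Struct F

namespace Struct

/-- Pairing of structures, erasing empty substructures. -/
def comma {F : Type} : Struct F → Struct F → Struct F
  | .emp, Δ => Δ
  | Γ, .emp => Γ
  | Γ, Δ => .pair Γ Δ

def map {F G : Type} (f : F → G) : Struct F → Struct G
  | .emp => .emp
  | .leaf a => .leaf (f a)
  | .pair l r => .pair (map f l) (map f r)

/-- Number of formula leaves of a structure. -/
def nleaves {F : Type} : Struct F → ℕ
  | .emp => 0
  | .leaf _ => 1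
  | .pair l r => nleaves l + nleaves r

/-- All formula leaves of a structure satisfy a predicate. -/
def Forall {F : Type} (p : F → Prop) : Struct F → Prop
  | .emp => True
  | .leaf a => p a
  | .pair l r => Forall p l ∧ Forall p r

end Struct

/-- Structural equivalence: the reflexive, symmetric, transitive closure of
top-level exchange and top-level associativity. -/
inductive StEquiv {F : Type} : Struct F → Struct F → Prop where
  | refl (Γ : Struct F) : StEquiv Γ Γ
  | symm {Γ Δ : Struct F} : StEquiv Γ Δ → StEquiv Δ Γ
  | trans {Γ Δ Θ : Struct F} : StEquiv Γ Δ → StEquiv Δ Θ → StEquiv Γ Θ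
  | exch (Γ Δ : Struct F) : StEquiv (Γ.comma Δ) (Δ.comma Γ)
  | assoc (Γ Δ Θ : Struct F) : StEquiv (Γ.comma (Δ.comma Θ)) ((Γ.comma Δ).comma Θ)

/-- Contexts with one hole. -/
inductive Ctx (F : Type) : Type where
  | hole : Ctx F
  | pairL : Ctx F → Struct F → Ctx F
  | pairR : Struct F → Ctx F → Ctx F

namespace Ctx

/-- Filling the hole of a context with a structure (empty substructures are erased). -/
def fill {F : Type} : Ctx F → Struct F → Struct F
  | .hole, Ξ => Ξ
  | .pairL R Δ, Ξ => (fill R Ξ).comma Δ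
  | .pairR Γ R, Ξ => Γ.comma (fill R Ξ)

/-- A context viewed as a structure over `Option F`, the hole being the leaf `none`. -/
def toStruct {F : Type} : Ctx F → Struct (Option F)
  | .hole => .leaf none
  | .pairL R Δ => (toStruct R).comma (Δ.map some)
  | .pairR Γ R => (Γ.map some).comma (toStruct R)

def size {F : Type} : Ctx F → ℕ
  | .hole => 0
  | .pairL R _ => size R + 2
  | .pairR _ R => size R + 1

/-- The designator. -/
def desi {F : Type} : Ctx F → Struct F
  | .hole => .emp
  | .pairL R Δ => desi (.pairR Δ R)
  | .pairR Γ .hole => Γ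
  | .pairR Γ (.pairR Δ P) => desi (.pairR (Γ.comma Δ) P)
  | .pairR Γ (.pairL D Θp) => desi (.pairR (Θp.comma Γ) D)
termination_by c => size c
decreasing_by all_goals simp [size]

/-- All formula leaves of a context (other than the hole) satisfy a predicate. -/
def Forall {F : Type} (p : F → Prop) : Ctx F → Prop
  | .hole => True
  | .pairL R Δ => Forall p R ∧ Δ.Forall p
  | .pairR Γ R => Γ.Forall p ∧ Forall p R

end Ctx

/-- Structural equivalence of one-hole contexts, treating the hole as a leaf. -/
def CtxEquiv {F : Type} (T X : Ctx F) : Prop := StEquiv T.toStruct X.toStruct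

/-- Contexts with two holes (the first hole is the designated one). -/
inductive Ctx2 (F : Type) : Type where
  | splitLR : Ctx F → Ctx F → Ctx2 F
  | splitRL : Ctx F → Ctx F → Ctx2 F
  | pairL : Ctx2 F → Struct F → Ctx2 F
  | pairR : Struct F → Ctx2 F → Ctx2 F

namespace Ctx2

/-- Filling the first hole of a two-hole context, yielding a one-hole context. -/
def fillFst {F : Type} : Ctx2 F → Struct F → Ctx F
  | .splitLR c1 c2, Δ => .pairR (c1.fill Δ) c2
  | .splitRL c2 c1, Δ => .pairL c2 (c1.fill Δ)
  | .pairL R Γ, Δ => .pairL (fillFst R Δ) Γ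
  | .pairR Γ R, Δ => .pairR Γ (fillFst R Δ)

end Ctx2

end NACLL
namespace NACLL

/-- Structural axioms that a subexponential may license. -/
inductive SubAx : Type where
  | C : SubAx
  | W : SubAx
  | E : SubAx
  | A1 : SubAx
  | A2 : SubAx
deriving DecidableEq

/-- A subexponential signature: a preordered set of indices together with an
upwardly closed assignment of licensed structural axioms. -/
structure Sig (I : Type) where
  le : I → I → Prop
  le_refl : ∀ i, le i i
  le_trans : ∀ {i j k}, le i j → le j k → le i k
  f : I → Set SubAx
  upclosed : ∀ {i j}, le i j → f i ⊆ f j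

/-- Formulas of classical non-associative non-commutative multimodal linear logic. -/
inductive CForm (I : Type) : Type where
  | pos : ℕ → CForm I
  | neg : ℕ → CForm I
  | tensor : CForm I → CForm I → CForm I
  | par : CForm I → CForm I → CForm I
  | one : CForm I
  | bot : CForm I
  | oplus : CForm I → CForm I → CForm I
  | with' : CForm I → CForm I → CForm I
  | zero : CForm I
  | top : CForm I
  | bang : I → CForm I → CForm I
  | quest : I → CForm I → CForm I

namespace CForm

/-- De Morgan dual, pushed to atomic scope (order-reversing on the multiplicatives). -/
def dual {I : Type} : CForm I → CForm I
  | .pos a => .neg a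
  | .neg a => .pos a
  | .tensor A B => .par (dual B) (dual A)
  | .par A B => .tensor (dual B) (dual A)
  | .one => .bot
  | .bot => .one
  | .oplus A B => .with' (dual A) (dual B)
  | .with' A B => .oplus (dual A) (dual B)
  | .zero => .top
  | .top => .zero
  | .bang i A => .quest i (dual A)
  | .quest i A => .bang i (dual A)

/-- The counter ♮ on formulas. -/
def counter {I : Type} : CForm I → ℤ
  | .pos _ => 0
  | .neg _ => 1
  | .tensor A B => counter A + counter B
  | .par A B => counter A + counter B - 1
  | .one => 0
  | .bot => 1
  | .oplus A _ => counter A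
  | .with' A _ => counter A
  | .zero => 1
  | .top => 0
  | .bang _ A => counter A
  | .quest _ A => counter A

end CForm

/-- The counter ♮ extended to structures. -/
def Struct.counter {I : Type} : Struct (CForm I) → ℤ
  | .emp => 0
  | .leaf A => A.counter
  | .pair l r => counter l + counter r

/-- All leaves of a (nonempty) structure are `?ᵏ`-formulas whose label licenses
the given structural axiom. -/
inductive QAll {I : Type} (σ : Sig I) (ax : SubAx) : Struct (CForm I) → Prop where
  | leaf {k : I} {F : CForm I} (h : ax ∈ σ.f k) : QAll σ ax (.leaf (.quest k F))
  | pair {Γ Δ : Struct (CForm I)} : QAll σ ax Γ → QAll σ ax Δ → QAll σ ax (.pair Γ Δ)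

/-- `UpSet σ i Γ Γ'` holds iff `Γ^{↑i}` is defined and equal to `Γ'`:
every leaf of `Γ` is a `?ᵏ`-formula which is kept when `i ⪯ k` and erased when
`i ⋠ k` and `W ∈ f(k)`. -/
inductive UpSet {I : Type} (σ : Sig I) (i : I) : Struct (CForm I) → Struct (CForm I) → Prop where
  | emp : UpSet σ i .emp .emp
  | keep {k : I} {F : CForm I} (h : σ.le i k) :
      UpSet σ i (.leaf (.quest k F)) (.leaf (.quest k F))
  | drop {k : I} {F : CForm I} (h1 : ¬ σ.le i k) (h2 : SubAx.W ∈ σ.f k) :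
      UpSet σ i (.leaf (.quest k F)) .emp
  | pair {Γ Γ' Δ Δ' : Struct (CForm I)} :
      UpSet σ i Γ Γ' → UpSet σ i Δ Δ' → UpSet σ i (.pair Γ Δ) (Γ'.comma Δ')

/-- Structures over `Option F` serve as multi-hole contexts: `none`-leaves are
holes. `fillAll T D` fills every hole with `D` (erasing empty substructures). -/
def fillAll {F : Type} : Struct (Option F) → Struct F → Struct F
  | .emp, _ => .emp
  | .leaf (some a), _ => .leaf a
  | .leaf none, D => D
  | .pair l r, D => (fillAll l D).comma (fillAll r D)

/-- Derivability in the one-sided classical sequent calculus CacLL over the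
signature `σ`.  The Boolean flag indicates whether the cut rule may be used:
`CDer σ false` is cut-free CacLL, `CDer σ true` is CacLL extended with cut. -/
inductive CDer {I : Type} (σ : Sig I) : Bool → Struct (CForm I) → Prop where
  | initP {b : Bool} (a : ℕ) :
      CDer σ b (.pair (.leaf (.pos a)) (.leaf (.neg a)))
  | initN {b : Bool} (a : ℕ) :
      CDer σ b (.pair (.leaf (.neg a)) (.leaf (.pos a)))
  | tensor {b : Bool} {Γ Δ : Struct (CForm I)} {F G : CForm I} :
      CDer σ b (Γ.comma (.leaf G)) → CDer σ b (Δ.comma (.leaf F)) →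
      CDer σ b ((Γ.comma Δ).comma (.leaf (.tensor F G)))
  | par {b : Bool} (R : Ctx (CForm I)) {F G : CForm I} :
      CDer σ b (R.fill (.pair (.leaf F) (.leaf G))) →
      CDer σ b (R.fill (.leaf (.par F G)))
  | oplus₁ {b : Bool} (R : Ctx (CForm I)) {F1 F2 : CForm I} :
      CDer σ b (R.fill (.leaf F1)) → CDer σ b (R.fill (.leaf (.oplus F1 F2)))
  | oplus₂ {b : Bool} (R : Ctx (CForm I)) {F1 F2 : CForm I} :
      CDer σ b (R.fill (.leaf F2)) → CDer σ b (R.fill (.leaf (.oplus F1 F2)))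
  | with' {b : Bool} (R : Ctx (CForm I)) {F1 F2 : CForm I} :
      CDer σ b (R.fill (.leaf F1)) → CDer σ b (R.fill (.leaf F2)) →
      CDer σ b (R.fill (.leaf (.with' F1 F2)))
  | bot {b : Bool} (R : Ctx (CForm I)) :
      CDer σ b (R.fill .emp) → CDer σ b (R.fill (.leaf .bot))
  | one {b : Bool} : CDer σ b (.leaf .one)
  | top {b : Bool} (R : Ctx (CForm I)) : CDer σ b (R.fill (.leaf .top))
  | exch {b : Bool} {Γ Δ : Struct (CForm I)} :
      CDer σ b (Δ.comma Γ) → CDer σ b (Γ.comma Δ)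
  | assoc₁ {b : Bool} {Γ Δ Θ : Struct (CForm I)} :
      CDer σ b (Γ.comma (Δ.comma Θ)) → CDer σ b ((Γ.comma Δ).comma Θ)
  | assoc₂ {b : Bool} {Γ Δ Θ : Struct (CForm I)} :
      CDer σ b ((Γ.comma Δ).comma Θ) → CDer σ b (Γ.comma (Δ.comma Θ))
  | prom {b : Bool} {Γ Γ' : Struct (CForm I)} {i : I} {F : CForm I} :
      UpSet σ i Γ Γ' → CDer σ b (Γ'.comma (.leaf F)) →
      CDer σ b (Γ.comma (.leaf (.bang i F)))
  | der {b : Bool} (R : Ctx (CForm I)) {i : I} {F : CForm I} :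
      CDer σ b (R.fill (.leaf F)) → CDer σ b (R.fill (.leaf (.quest i F)))
  | qA1 {b : Bool} {Δ1 Δ2 Δ3 Γ : Struct (CForm I)} (h : QAll σ .A1 Γ) :
      CDer σ b (((Δ1.comma Δ2).comma Δ3).comma Γ) →
      CDer σ b ((Δ1.comma (Δ2.comma Δ3)).comma Γ)
  | qA2 {b : Bool} {Δ1 Δ2 Δ3 Γ : Struct (CForm I)} (h : QAll σ .A2 Γ) :
      CDer σ b ((Δ1.comma (Δ2.comma Δ3)).comma Γ) →
      CDer σ b (((Δ1.comma Δ2).comma Δ3).comma Γ)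
  | qE {b : Bool} {Δ1 Δ2 Γ : Struct (CForm I)} (h : QAll σ .E Γ) :
      CDer σ b ((Δ2.comma Δ1).comma Γ) → CDer σ b ((Δ1.comma Δ2).comma Γ)
  | qW {b : Bool} (R : Ctx (CForm I)) {Δ : Struct (CForm I)} (h : QAll σ .W Δ) :
      CDer σ b (R.fill .emp) → CDer σ b (R.fill Δ)
  | qC {b : Bool} (R : Ctx2 (CForm I)) {Δ : Struct (CForm I)} (h : QAll σ .C Δ) :
      CDer σ b ((R.fillFst Δ).fill Δ) → CDer σ b ((R.fillFst .emp).fill Δ)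
  | cut {Γ Δ : Struct (CForm I)} {A : CForm I} :
      CDer σ true (Γ.comma (.leaf A)) → CDer σ true ((Struct.leaf A.dual).comma Δ) →
      CDer σ true (Γ.comma Δ)

end NACLL

namespace NACLL

/-- Formulas of acLL extended with the additive constant `0`. -/
inductive IForm0 (I : Type) : Type where
  | atom : ℕ → IForm0 I
  | tensor : IForm0 I → IForm0 I → IForm0 I
  | imp : IForm0 I → IForm0 I → IForm0 I    -- `imp A B` is A → B
  | limp : IForm0 I → IForm0 I → IForm0 I   -- `limp B A` is B ← A
  | oplus : IForm0 I → IForm0 I → IForm0 I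
  | with' : IForm0 I → IForm0 I → IForm0 I
  | one : IForm0 I
  | top : IForm0 I
  | zero : IForm0 I
  | bang : I → IForm0 I → IForm0 I

/-- The positive translation, extended by `0̂ = 0`. -/
def IForm0.pos {I : Type} : IForm0 I → CForm I
  | .atom a => .pos a
  | .tensor A B => .tensor A.pos B.pos
  | .imp A B => .par A.pos.dual B.pos
  | .limp B A => .par B.pos A.pos.dual
  | .oplus A B => .oplus A.pos B.pos
  | .with' A B => .with' A.pos B.pos
  | .one => .one
  | .top => .top
  | .zero => .zero
  | .bang i A => .bang i A.pos

/-- The negative translation of structures (order-reversing, dualizing leaves). -/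
def negTrans0 {I : Type} : Struct (IForm0 I) → Struct (CForm I)
  | .emp => .emp
  | .leaf A => .leaf A.pos.dual
  | .pair Γ Δ => (negTrans0 Δ).comma (negTrans0 Γ)

inductive BAll0 {I : Type} (σ : Sig I) (ax : SubAx) : Struct (IForm0 I) → Prop where
  | leaf {k : I} {F : IForm0 I} (h : ax ∈ σ.f k) : BAll0 σ ax (.leaf (.bang k F))
  | pair {Γ Δ : Struct (IForm0 I)} : BAll0 σ ax Γ → BAll0 σ ax Δ → BAll0 σ ax (.pair Γ Δ)

inductive IUpSet0 {I : Type} (σ : Sig I) (i : I) : Struct (IForm0 I) → Struct (IForm0 I) → Prop where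
  | emp : IUpSet0 σ i .emp .emp
  | keep {k : I} {F : IForm0 I} (h : σ.le i k) :
      IUpSet0 σ i (.leaf (.bang k F)) (.leaf (.bang k F))
  | drop {k : I} {F : IForm0 I} (h1 : ¬ σ.le i k) (h2 : SubAx.W ∈ σ.f k) :
      IUpSet0 σ i (.leaf (.bang k F)) .emp
  | pair {Γ Γ' Δ Δ' : Struct (IForm0 I)} :
      IUpSet0 σ i Γ Γ' → IUpSet0 σ i Δ Δ' → IUpSet0 σ i (.pair Γ Δ) (Γ'.comma Δ')

/-- Derivability in acLL extended with the constant `0` and the rule `0L`. -/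
inductive IDer0 {I : Type} (σ : Sig I) : Struct (IForm0 I) → IForm0 I → Prop where
  | init (A : IForm0 I) : IDer0 σ (.leaf A) A
  | zeroL (R : Ctx (IForm0 I)) (C : IForm0 I) : IDer0 σ (R.fill (.leaf .zero)) C
  | tensorL (R : Ctx (IForm0 I)) {A B C : IForm0 I} :
      IDer0 σ (R.fill (.pair (.leaf A) (.leaf B))) C →
      IDer0 σ (R.fill (.leaf (.tensor A B))) C
  | tensorR {Γ Δ : Struct (IForm0 I)} {A B : IForm0 I} :
      IDer0 σ Γ A → IDer0 σ Δ B → IDer0 σ (Γ.comma Δ) (.tensor A B)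
  | impL (R : Ctx (IForm0 I)) {Δ : Struct (IForm0 I)} {A B C : IForm0 I} :
      IDer0 σ Δ A → IDer0 σ (R.fill (.leaf B)) C →
      IDer0 σ (R.fill (Δ.comma (.leaf (.imp A B)))) C
  | impR {Γ : Struct (IForm0 I)} {A B : IForm0 I} :
      IDer0 σ ((Struct.leaf A).comma Γ) B → IDer0 σ Γ (.imp A B)
  | limpL (R : Ctx (IForm0 I)) {Δ : Struct (IForm0 I)} {A B C : IForm0 I} :
      IDer0 σ Δ A → IDer0 σ (R.fill (.leaf B)) C →
      IDer0 σ (R.fill ((Struct.leaf (.limp B A)).comma Δ)) C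
  | limpR {Γ : Struct (IForm0 I)} {A B : IForm0 I} :
      IDer0 σ (Γ.comma (.leaf A)) B → IDer0 σ Γ (.limp B A)
  | oplusL (R : Ctx (IForm0 I)) {A B C : IForm0 I} :
      IDer0 σ (R.fill (.leaf A)) C → IDer0 σ (R.fill (.leaf B)) C →
      IDer0 σ (R.fill (.leaf (.oplus A B))) C
  | oplusR₁ {Γ : Struct (IForm0 I)} {A B : IForm0 I} : IDer0 σ Γ A → IDer0 σ Γ (.oplus A B)
  | oplusR₂ {Γ : Struct (IForm0 I)} {A B : IForm0 I} : IDer0 σ Γ B → IDer0 σ Γ (.oplus A B)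
  | withL₁ (R : Ctx (IForm0 I)) {A B C : IForm0 I} :
      IDer0 σ (R.fill (.leaf A)) C → IDer0 σ (R.fill (.leaf (.with' A B))) C
  | withL₂ (R : Ctx (IForm0 I)) {A B C : IForm0 I} :
      IDer0 σ (R.fill (.leaf B)) C → IDer0 σ (R.fill (.leaf (.with' A B))) C
  | withR {Γ : Struct (IForm0 I)} {A B : IForm0 I} :
      IDer0 σ Γ A → IDer0 σ Γ B → IDer0 σ Γ (.with' A B)
  | oneL (R : Ctx (IForm0 I)) {C : IForm0 I} :
      IDer0 σ (R.fill .emp) C → IDer0 σ (R.fill (.leaf .one)) C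
  | oneR : IDer0 σ .emp .one
  | topR (Γ : Struct (IForm0 I)) : IDer0 σ Γ .top
  | prom {Γ Γ' : Struct (IForm0 I)} {i : I} {A : IForm0 I} :
      IUpSet0 σ i Γ Γ' → IDer0 σ Γ' A → IDer0 σ Γ (.bang i A)
  | der (R : Ctx (IForm0 I)) {i : I} {A C : IForm0 I} :
      IDer0 σ (R.fill (.leaf A)) C → IDer0 σ (R.fill (.leaf (.bang i A))) C
  | wk (R : Ctx (IForm0 I)) {Δ : Struct (IForm0 I)} {C : IForm0 I} (h : BAll0 σ .W Δ) :
      IDer0 σ (R.fill .emp) C → IDer0 σ (R.fill Δ) C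
  | ctr (R : Ctx2 (IForm0 I)) {Δ : Struct (IForm0 I)} {C : IForm0 I} (h : BAll0 σ .C Δ) :
      IDer0 σ ((R.fillFst Δ).fill Δ) C → IDer0 σ ((R.fillFst .emp).fill Δ) C
  | e1 (R : Ctx (IForm0 I)) {Δ Θ : Struct (IForm0 I)} {C : IForm0 I} (h : BAll0 σ .E Δ) :
      IDer0 σ (R.fill (Θ.comma Δ)) C → IDer0 σ (R.fill (Δ.comma Θ)) C
  | e2 (R : Ctx (IForm0 I)) {Δ Θ : Struct (IForm0 I)} {C : IForm0 I} (h : BAll0 σ .E Δ) :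
      IDer0 σ (R.fill (Δ.comma Θ)) C → IDer0 σ (R.fill (Θ.comma Δ)) C
  | a1 (R : Ctx (IForm0 I)) {Δ1 Δ2 Δ3 : Struct (IForm0 I)} {C : IForm0 I} (h : BAll0 σ .A1 Δ1) :
      IDer0 σ (R.fill ((Δ1.comma Δ2).comma Δ3)) C →
      IDer0 σ (R.fill (Δ1.comma (Δ2.comma Δ3))) C
  | a2 (R : Ctx (IForm0 I)) {Δ1 Δ2 Δ3 : Struct (IForm0 I)} {C : IForm0 I} (h : BAll0 σ .A2 Δ3) :
      IDer0 σ (R.fill (Δ1.comma (Δ2.comma Δ3))) C →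
      IDer0 σ (R.fill ((Δ1.comma Δ2).comma Δ3)) C

/-- The formula `!ᵃ((r ← (0 → q)) ← p)`, with `p,q,r,s` the atoms `0,1,2,3`. -/
def zeroF1 {I : Type} (a : I) : IForm0 I :=
  .bang a (.limp (.limp (.atom 2) (.imp .zero (.atom 1))) (.atom 0))

/-- The formula `(s ← p) → 0`. -/
def zeroF2 {I : Type} : IForm0 I :=
  .imp (.limp (.atom 3) (.atom 0)) .zero

section Soundness
open Pointwise

/-- Interpretation of formulas as sets of natural numbers. -/
def sem {I : Type} : IForm0 I → Set ℕ
  | .atom 0 => {1}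
  | .atom 2 => {n | 1 ≤ n}
  | .atom _ => ∅
  | .tensor A B => sem A + sem B
  | .imp A B => {n | ∀ m ∈ sem A, m + n ∈ sem B}
  | .limp B A => {n | ∀ m ∈ sem A, n + m ∈ sem B}
  | .oplus A B => sem A ∪ sem B
  | .with' A B => sem A ∩ sem B
  | .one => 0
  | .top => Set.univ
  | .zero => ∅
  | .bang _ A => {n | n = 0 ∧ 0 ∈ sem A}

def semS {I : Type} : Struct (IForm0 I) → Set ℕ
  | .emp => 0
  | .leaf A => sem A
  | .pair l r => semS l + semS r

def semC {I : Type} : Ctx (IForm0 I) → Set ℕ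
  | .hole => 0
  | .pairL R Δ => semC R + semS Δ
  | .pairR Γ R => semS Γ + semC R

def semC2 {I : Type} : Ctx2 (IForm0 I) → Set ℕ
  | .splitLR c d => semC c + semC d
  | .splitRL c d => semC c + semC d
  | .pairL R Δ => semC2 R + semS Δ
  | .pairR Γ R => semS Γ + semC2 R

theorem semS_comma {I : Type} (Γ Δ : Struct (IForm0 I)) :
    semS (Γ.comma Δ) = semS Γ + semS Δ := by
  cases Γ <;> cases Δ <;> simp [Struct.comma, semS]

theorem semS_fill {I : Type} (R : Ctx (IForm0 I)) (Δ : Struct (IForm0 I)) :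
    semS (R.fill Δ) = semC R + semS Δ := by
  induction R with
  | hole => simp [Ctx.fill, semC]
  | pairL R Γ ih => rw [Ctx.fill, semS_comma, ih, semC]; abel
  | pairR Γ R ih => rw [Ctx.fill, semS_comma, ih, semC]; abel

theorem semC_fillFst {I : Type} (R : Ctx2 (IForm0 I)) (Δ : Struct (IForm0 I)) :
    semC (R.fillFst Δ) = semC2 R + semS Δ := by
  induction R with
  | splitLR c d => rw [Ctx2.fillFst, semC, semS_fill, semC2]; abel
  | splitRL c d => rw [Ctx2.fillFst, semC, semS_fill, semC2]; abel
  | pairL R Γ ih => rw [Ctx2.fillFst, semC, ih, semC2]; abel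
  | pairR Γ R ih => rw [Ctx2.fillFst, semC, ih, semC2]; abel

theorem semS_ball {I : Type} {σ : Sig I} {ax : SubAx} {Δ : Struct (IForm0 I)}
    (h : BAll0 σ ax Δ) : semS Δ ⊆ 0 := by
  induction h with
  | leaf h => intro n hn; exact hn.1
  | pair _ _ ih1 ih2 =>
    have := Set.add_subset_add ih1 ih2
    simpa [semS] using this

theorem semS_up {I : Type} {σ : Sig I} {i : I} {Γ Γ' : Struct (IForm0 I)}
    (h : IUpSet0 σ i Γ Γ') : semS Γ ⊆ 0 ∧ semS Γ ⊆ semS Γ' := by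
  induction h with
  | emp => exact ⟨subset_rfl, subset_rfl⟩
  | keep h => exact ⟨fun n hn => hn.1, subset_rfl⟩
  | drop h1 h2 => exact ⟨fun n hn => hn.1, fun n hn => hn.1⟩
  | pair _ _ ih1 ih2 =>
    refine ⟨?_, ?_⟩
    · have := Set.add_subset_add ih1.1 ih2.1
      simpa [semS] using this
    · rw [semS_comma]; exact Set.add_subset_add ih1.2 ih2.2

theorem sem_sound {I : Type} {σ : Sig I} {Γ : Struct (IForm0 I)} {A : IForm0 I}
    (h : IDer0 σ Γ A) : semS Γ ⊆ sem A := by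
  induction h with
  | init A => exact subset_rfl
  | zeroL R C => rw [semS_fill]; simp [semS, sem]
  | tensorL R _ ih => rw [semS_fill] at ih ⊢; exact ih
  | tensorR _ _ ih1 ih2 => rw [semS_comma]; exact Set.add_subset_add ih1 ih2
  | impL R _ _ ih1 ih2 =>
    rw [semS_fill] at ih2 ⊢
    refine (Set.add_subset_add_left ?_).trans ih2
    rw [semS_comma]
    rintro _ ⟨m, hm, n, hn, rfl⟩
    exact hn m (ih1 hm)
  | impR _ ih =>
    rw [semS_comma] at ih
    intro n hn m hm
    exact ih (Set.add_mem_add hm hn)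
  | limpL R _ _ ih1 ih2 =>
    rw [semS_fill] at ih2 ⊢
    refine (Set.add_subset_add_left ?_).trans ih2
    rw [semS_comma]
    rintro _ ⟨m, hm, n, hn, rfl⟩
    exact hm n (ih1 hn)
  | limpR _ ih =>
    rw [semS_comma] at ih
    intro n hn m hm
    exact ih (Set.add_mem_add hn hm)
  | oplusL R _ _ ih1 ih2 =>
    rw [semS_fill] at ih1 ih2 ⊢
    simp only [semS, sem, Set.add_union] at *
    exact Set.union_subset ih1 ih2
  | oplusR₁ _ ih => exact ih.trans Set.subset_union_left
  | oplusR₂ _ ih => exact ih.trans Set.subset_union_right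
  | withL₁ R _ ih =>
    rw [semS_fill] at ih ⊢
    exact (Set.add_subset_add_left Set.inter_subset_left).trans ih
  | withL₂ R _ ih =>
    rw [semS_fill] at ih ⊢
    exact (Set.add_subset_add_left Set.inter_subset_right).trans ih
  | withR _ _ ih1 ih2 => exact Set.subset_inter ih1 ih2
  | oneL R _ ih => rw [semS_fill] at ih ⊢; exact ih
  | oneR => exact subset_rfl
  | topR Γ => exact Set.subset_univ _
  | prom h _ ih =>
    intro n hn
    have h0 : n = 0 := (semS_up h).1 hn
    subst h0
    exact ⟨rfl, ih ((semS_up h).2 hn)⟩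
  | der R _ ih =>
    rw [semS_fill] at ih ⊢
    refine (Set.add_subset_add_left ?_).trans ih
    rintro n ⟨rfl, hn⟩
    exact hn
  | wk R h _ ih =>
    rw [semS_fill] at ih ⊢
    exact (Set.add_subset_add_left (semS_ball h)).trans ih
  | @ctr R Δ C h _ ih =>
    rw [semS_fill, semC_fillFst] at ih ⊢
    refine Set.Subset.trans ?_ ih
    rw [add_assoc, add_assoc]
    refine Set.add_subset_add_left ?_
    intro n hn
    have hn' : n ∈ semS Δ := by simpa [semS] using hn
    have h0 : n = 0 := semS_ball h hn'
    subst h0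
    exact ⟨0, hn', 0, hn', rfl⟩
  | e1 R h _ ih =>
    rw [semS_fill, semS_comma] at ih ⊢
    rwa [add_comm (semS _) (semS _)]
  | e2 R h _ ih =>
    rw [semS_fill, semS_comma] at ih ⊢
    rwa [add_comm (semS _) (semS _)]
  | a1 R h _ ih =>
    simp only [semS_fill, semS_comma, add_assoc] at ih ⊢
    exact ih
  | a2 R h _ ih =>
    simp only [semS_fill, semS_comma, add_assoc] at ih ⊢
    exact ih

theorem zero_not_provable {I : Type} (σ : Sig I) (a : I) :
    ¬ IDer0 σ (.pair (.leaf (zeroF1 a)) (.leaf zeroF2)) (.atom 2) := by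
  intro h
  have h1 : (0 : ℕ) + 0 ∈ sem (.atom 2 : IForm0 I) := by
    refine sem_sound h (Set.add_mem_add ?_ ?_)
    · refine ⟨rfl, ?_⟩
      intro m hm k _
      have hm' : m = 1 := hm
      show 1 ≤ 0 + m + k
      omega
    · intro m hm
      exact hm 1 rfl
  have h2 : 1 ≤ 0 + 0 := h1
  omega

end Soundness

theorem zero_classical {I : Type} (σ : Sig I) (a : I)
    (hc : SubAx.C ∈ σ.f a) (hw : SubAx.W ∈ σ.f a) :
    CDer σ false
      ((negTrans0 (Struct.pair (.leaf (zeroF1 a)) (.leaf zeroF2))).comma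
        (.leaf ((IForm0.atom 2 : IForm0 I).pos))) := by
  let r : Struct (CForm I) := .leaf (.pos 2)
  let s : Struct (CForm I) := .leaf (.pos 3)
  let np : Struct (CForm I) := .leaf (.neg 0)
  let H : CForm I := .tensor (.par .top (.pos 1)) (.neg 2)
  let G : CForm I := .tensor (.pos 0) H
  let Q : Struct (CForm I) := .leaf (.quest a G)
  let T : CForm I := .tensor .top (.par (.pos 3) (.neg 0))
  show CDer σ false (.pair (.pair (.leaf T) Q) r)
  have hH : CDer σ false (.pair (.pair r s) (.leaf H)) := by
    refine CDer.tensor (Γ := r) (Δ := s) (CDer.initP 2) ?_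
    refine CDer.par (.pairR s .hole) ?_
    exact CDer.top (.pairR s (.pairL .hole (.leaf (.pos 1))))
  have hG : CDer σ false (.pair (.pair (.pair r s) np) (.leaf G)) :=
    CDer.tensor (Γ := .pair r s) (Δ := np) hH (CDer.initN 0)
  have h1 : CDer σ false (.pair (.pair (.pair r s) np) Q) :=
    CDer.der (.pairR (.pair (.pair r s) np) .hole) hG
  have h2 : CDer σ false (.pair (.pair r s) (.pair np Q)) :=
    CDer.assoc₂ (Γ := .pair r s) (Δ := np) (Θ := Q) h1
  have h3 : CDer σ false (.pair r (.pair s (.pair np Q))) :=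
    CDer.assoc₂ (Γ := r) (Δ := s) (Θ := .pair np Q) h2
  have h4 : CDer σ false (.pair (.pair Q r) (.pair s (.pair np Q))) :=
    CDer.qW (.pairL (.pairL .hole r) (.pair s (.pair np Q))) (Δ := Q) (.leaf hw) h3
  have h5 : CDer σ false (.pair (.pair Q r) (.pair s np)) :=
    CDer.qC (.splitRL (.pairL .hole r) (.pairR s (.pairR np .hole))) (Δ := Q) (.leaf hc) h4
  have h6 : CDer σ false (.pair (.pair Q r) (.leaf (.par (.pos 3) (.neg 0)))) :=
    CDer.par (.pairR (.pair Q r) .hole) h5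
  have h7 : CDer σ false (.pair (.pair Q r) (.leaf T)) :=
    CDer.tensor (Γ := .pair Q r) (Δ := .emp) h6 (CDer.top .hole)
  have h8 : CDer σ false (.pair (.leaf T) (.pair Q r)) :=
    CDer.exch (Γ := .leaf T) (Δ := .pair Q r) h7
  exact CDer.assoc₁ (Γ := .leaf T) (Δ := Q) (Θ := r) h8

/-- **Incompleteness with the additive constant 0.**  Let acLL be extended
with `0` and the rule `0L`, and let the label `a` satisfy `C, W, E ∈ f(a)`.
The sequent `!ᵃ((r←(0→q))←p), (s←p)→0 ⊢ r` is not provable in the extended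
intuitionistic system, yet its translation
`⊢ ((⊤⊗(s⅋p⊥), ?ᵃ(p⊗((⊤⅋q)⊗r⊥))), r)` is provable in CacLL.  Hence
conservativity fails in the presence of `0`. -/
theorem incompleteness_zero {I : Type} (σ : Sig I) (a : I)
    (hc : SubAx.C ∈ σ.f a) (hw : SubAx.W ∈ σ.f a) (he : SubAx.E ∈ σ.f a) :
    ¬ IDer0 σ (.pair (.leaf (zeroF1 a)) (.leaf zeroF2)) (.atom 2) ∧
    CDer σ false
      ((negTrans0 (Struct.pair (.leaf (zeroF1 a)) (.leaf zeroF2))).comma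
        (.leaf ((IForm0.atom 2 : IForm0 I).pos))) := by
  exact ⟨zero_not_provable σ a, zero_classical σ a hc hw⟩

end NACLL
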